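/- For n = 4, the operator 𝒟 commutes with the o(4,ℝ)-action on 4-tuples of polynomials: for all 1 ≤ r < s ≤ 4 and every 4-tuple u of polynomials in ℝ[x₁,x₂,x₃,x₄], 𝒟(L_{r,s}(u)) = L_{r,s}(𝒟(u)). -/

import Mathlib

open MvPolynomial

/-- `d_{r,s} = x_s∂_{x_r} − x_r∂_{x_s}`. -/
noncomputable def dd (r s : Fin 4) (p : MvPolynomial (Fin 4) ℝ) :
    MvPolynomial (Fin 4) ℝ :=
  X s * pderiv r p - X r * pderiv s p

/-- The operator `𝒟` given by the matrix
`[[0, d_{3,4}, d_{4,2}, d_{2,3}], [d_{4,3}, 0, d_{1,4}, d_{3,1}],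
  [d_{2,4}, d_{4,1}, 0, d_{1,2}], [d_{3,2}, d_{1,3}, d_{2,1}, 0]]`. -/
noncomputable def Dop (u : Fin 4 → MvPolynomial (Fin 4) ℝ) :
    Fin 4 → MvPolynomial (Fin 4) ℝ :=
  ![dd 2 3 (u 1) + dd 3 1 (u 2) + dd 1 2 (u 3),
    dd 3 2 (u 0) + dd 0 3 (u 2) + dd 2 0 (u 3),
    dd 1 3 (u 0) + dd 3 0 (u 1) + dd 0 1 (u 3),
    dd 2 1 (u 0) + dd 0 2 (u 1) + dd 1 0 (u 2)]

/-- The `o(4,ℝ)`-action on tuples: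
`L_{r,s}(u) = (x_r∂_{x_s} − x_s∂_{x_r})(u) + u_s ς_r − u_r ς_s`. -/
noncomputable def Lop (r s : Fin 4) (u : Fin 4 → MvPolynomial (Fin 4) ℝ) :
    Fin 4 → MvPolynomial (Fin 4) ℝ :=
  fun j => (X r * pderiv s (u j) - X s * pderiv r (u j))
    + (if j = r then u s else 0) - (if j = s then u r else 0)

/-- Mixed partial derivatives of polynomials agree. -/
theorem pderiv_pderiv_comm {σ R : Type*} [CommRing R] (i j : σ) (p : MvPolynomial σ R) :
    pderiv i (pderiv j p) = pderiv j (pderiv i p) := by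
  classical
  have h : ⁅pderiv i, pderiv j⁆ = (0 : Derivation R (MvPolynomial σ R) (MvPolynomial σ R)) :=
    derivation_ext fun k => by
      rw [Derivation.commutator_apply]
      simp [pderiv_X, Pi.single_apply, apply_ite]
  simpa [Derivation.commutator_apply, sub_eq_zero] using congrArg (fun D => D p) h

set_option maxHeartbeats 2000000 in
/-- `𝒟` commutes with the `o(4,ℝ)`-action: for all `r < s` and every
`4`-tuple `u` of polynomials, `𝒟(L_{r,s}(u)) = L_{r,s}(𝒟(u))`. -/
theorem Dop_commutes_Lop (r s : Fin 4) (hrs : r < s)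
    (u : Fin 4 → MvPolynomial (Fin 4) ℝ) :
    Dop (Lop r s u) = Lop r s (Dop u) := by
  have hX (i j : Fin 4) : pderiv i (X j : MvPolynomial (Fin 4) ℝ) = if i = j then 1 else 0 := by
    rw [pderiv_X, Pi.single_apply]
    simp only [eq_comm]
  funext j
  fin_cases r <;> fin_cases s <;> first | exact absurd hrs (by decide) | skip
  all_goals
    fin_cases j <;>
    simp [Dop, Lop, dd, hX, pderiv_pderiv_comm (1 : Fin 4) 0, pderiv_pderiv_comm (2 : Fin 4) 0,
      pderiv_pderiv_comm (3 : Fin 4) 0, pderiv_pderiv_comm (2 : Fin 4) 1, pderiv_pderiv_comm (3 : Fin 4) 1,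
      pderiv_pderiv_comm (3 : Fin 4) 2] <;>
    ring
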